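/- Let N ≥ 2 be an integer and p, q real numbers with p > 1 and q > p − 1. Then every strong solution u of (E) on all of ℝ^N is constant. -/

import Mathlib

open Metric Set Filter Topology MeasureTheory

/-- The vector field `x ↦ |∇u(x)|^{p-2} ∇u(x)`. -/
noncomputable def pGradField {N : ℕ} (p : ℝ) (u : EuclideanSpace ℝ (Fin N) → ℝ)
    (x : EuclideanSpace ℝ (Fin N)) : EuclideanSpace ℝ (Fin N) :=
  ‖gradient u x‖ ^ (p - 2) • gradient u x

/-- A strong solution of `(E) : -Δ_p u + |∇u|^q = 0` on an open set `G ⊆ ℝ^N`. -/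
def IsStrongSolution {N : ℕ} (p q : ℝ) (G : Set (EuclideanSpace ℝ (Fin N)))
    (u : EuclideanSpace ℝ (Fin N) → ℝ) : Prop :=
  ContDiffOn ℝ 1 u G ∧
  ContDiffOn ℝ 3 u {x | x ∈ G ∧ gradient u x ≠ 0} ∧
  ∀ x ∈ G, DifferentiableAt ℝ (pGradField p u) x ∧
    LinearMap.trace ℝ (EuclideanSpace ℝ (Fin N))
      (fderiv ℝ (pGradField p u) x : EuclideanSpace ℝ (Fin N) →ₗ[ℝ] EuclideanSpace ℝ (Fin N))
      = ‖gradient u x‖ ^ q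

/-!
Bernstein's method, with `θ = q - p + 1 > 0`. On a ball of radius `R` about `c`, take a maximum
point of `|∇u|^θ (R² - |x - c|²)` and write `v`, `A` and `y` for the gradient and the Hessian of
`u` there and for `|v| R / (R² - |x - c|²)`. The first and second order conditions for the logarithm
bound `|A v| / |v|` by a multiple of `y` and the Hessian of `|∇u|²` by a multiple of `y²`.
Differentiating the equation along `∇u` and inserting these bounds gives
`tr A² ≤ C (|tr A| y + y²)`, hence `|tr A| ≤ C y` because `(tr A)² ≤ n tr A²`. The equation
expresses `|v|^(θ + 1)` through `tr A` and `⟨A v, v⟩ / |v|²`, so that `|v|^θ (R² - |x - c|²) ≤ C R`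
at the maximum point. At the centre this reads `|∇u(c)|^θ ≤ C / R`, and `R → ∞` gives `∇u = 0`.
-/

open InnerProductSpace
open scoped RealInnerProductSpace Gradient

section Trace

variable {E : Type*} [NormedAddCommGroup E] [InnerProductSpace ℝ E]

/-- The quantity `|v|² tr A + (p - 2) ⟨A v, v⟩`: when `v` and `A` are the gradient and the Hessian
of `u` at a point where `v ≠ 0`, it is `|v|^{4-p} Δ_p u`. This normalization is polynomial in `v`
and thus avoids the singular factor. -/
noncomputable def pTrace (p : ℝ) (v : E) (A : E →L[ℝ] E) : ℝ :=
  ‖v‖ ^ 2 * LinearMap.trace ℝ E A + (p - 2) * ⟪A v, v⟫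

variable {A B : E →L[ℝ] E} {v : E} {p : ℝ}

theorem pTrace_add : pTrace p v (A + B) = pTrace p v A + pTrace p v B := by
  simp only [pTrace, ContinuousLinearMap.toLinearMap_add, map_add, _root_.add_apply, inner_add_left]
  ring

theorem pTrace_comp_self (hA : (A : E →ₗ[ℝ] E).IsSymmetric) :
    pTrace p v (A ∘L A) = ‖v‖ ^ 2 * LinearMap.trace ℝ E (A ∘L A) + (p - 2) * ‖A v‖ ^ 2 := by
  rw [pTrace, ← real_inner_self_eq_norm_sq (A v)]
  exact congr_arg (_ + (p - 2) * ·) (hA (A v) v)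

variable [FiniteDimensional ℝ E]

theorem inner_map_self_le_norm_sq_mul_trace (hA : ∀ e, 0 ≤ ⟪A e, e⟫) (v : E) :
    ⟪A v, v⟫ ≤ ‖v‖ ^ 2 * LinearMap.trace ℝ E A := by
  rcases eq_or_ne v 0 with rfl | hv
  · simp
  set e : E := ‖v‖⁻¹ • v
  have hve : v = ‖v‖ • e := (smul_inv_smul₀ (norm_ne_zero_iff.2 hv) v).symm
  have he : Orthonormal ℝ ((↑) : ({e} : Set E) → E) :=
    ⟨by rintro ⟨_, rfl⟩; exact norm_smul_inv_norm hv,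
      fun i j hij => absurd (Subsingleton.elim i j) hij⟩
  obtain ⟨s, b, hes, hb⟩ := he.exists_orthonormalBasis_extension
  have heb : b ⟨e, hes rfl⟩ = e := congr_fun hb _
  have htrace : ⟪A e, e⟫ ≤ LinearMap.trace ℝ E A := by
    rw [LinearMap.trace_eq_sum_inner _ b]
    simpa only [heb, ContinuousLinearMap.coe_coe, real_inner_comm] using Finset.single_le_sum
      (fun i _ => (hA (b i)).trans_eq (real_inner_comm _ _)) (Finset.mem_univ (⟨e, hes rfl⟩ : s))
  calc ⟪A v, v⟫ = ‖v‖ ^ 2 * ⟪A e, e⟫ := by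
        nth_rewrite 1 2 [hve]
        simp only [map_smul, real_inner_smul_left, real_inner_smul_right]
        ring
    _ ≤ _ := by gcongr

theorem pTrace_nonneg (hp : 1 ≤ p) (hA : ∀ e, 0 ≤ ⟪A e, e⟫) : 0 ≤ pTrace p v A := by
  have h := inner_map_self_le_norm_sq_mul_trace hA v
  rw [pTrace]
  nlinarith [hA v]

theorem pTrace_le {k : ℝ} (hp : 1 ≤ p) (hA : ∀ e, ⟪A e, e⟫ ≤ k * ‖e‖ ^ 2) :
    pTrace p v A ≤ (Module.finrank ℝ E + p - 2) * k * ‖v‖ ^ 2 := by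
  have h : 0 ≤ pTrace p v (k • ContinuousLinearMap.id ℝ E - A) := pTrace_nonneg hp fun e => by
    simpa [inner_sub_left, real_inner_smul_left] using hA e
  simp only [pTrace, ContinuousLinearMap.toLinearMap_sub, ContinuousLinearMap.toLinearMap_smul,
    ContinuousLinearMap.coe_id, map_sub, map_smul, LinearMap.trace_id, smul_eq_mul,
    _root_.sub_apply, _root_.smul_apply, ContinuousLinearMap.id_apply, inner_sub_left,
    real_inner_smul_left, real_inner_self_eq_norm_sq] at h ⊢
  linarith

theorem sq_trace_le_finrank_mul_trace_comp_self (hA : (A : E →ₗ[ℝ] E).IsSymmetric) :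
    LinearMap.trace ℝ E A ^ 2 ≤ Module.finrank ℝ E * LinearMap.trace ℝ E (A ∘L A) := by
  have b := stdOrthonormalBasis ℝ E
  simp only [LinearMap.trace_eq_sum_inner _ b, ContinuousLinearMap.coe_coe,
    ContinuousLinearMap.comp_apply]
  calc (∑ i, ⟪b i, A (b i)⟫) ^ 2 ≤ Module.finrank ℝ E * ∑ i, ⟪b i, A (b i)⟫ ^ 2 := by
        simpa using sq_sum_le_card_mul_sum_sq (s := Finset.univ) (f := fun i => ⟪b i, A (b i)⟫)
    _ ≤ Module.finrank ℝ E * ∑ i, ⟪b i, A (A (b i))⟫ := by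
        gcongr with i
        have h : ⟪b i, A (A (b i))⟫ = ‖A (b i)‖ ^ 2 :=
          (hA (b i) (A (b i))).symm.trans (real_inner_self_eq_norm_sq _)
        rw [h, ← sq_abs]
        simpa using pow_le_pow_left₀ (abs_nonneg _) (abs_real_inner_le_norm (b i) (A (b i))) 2

end Trace

section Jet

theorem le_mul_of_sq_le {a b X y : ℝ} (ha : 0 ≤ a) (hb : 0 ≤ b) (hy : 0 ≤ y)
    (h : X ^ 2 ≤ a * X * y + b * y ^ 2) : X ≤ (1 + a + b) * y := by
  by_contra! hlt
  have hyX : y ≤ X := by nlinarith [mul_nonneg ha hy, mul_nonneg hb hy]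
  have hX : 0 < X := hlt.trans_le' (by positivity)
  nlinarith [mul_le_mul_of_nonneg_left hyX (mul_nonneg hb hy)]

variable {E : Type*} [NormedAddCommGroup E] [InnerProductSpace ℝ E]
  {A B : E →L[ℝ] E} {v : E} {p m : ℝ}

/-- Bernstein's identity. The hypothesis is the equation `Δ_p u = |∇u|^q` differentiated in the
direction `v = ∇u`, where `A = D²u` and `B = D_v A`; then `B + A²` is the Hessian of `|∇u|² / 2`. -/
theorem norm_sq_mul_trace_comp_self_eq (hv : v ≠ 0) (hA : (A : E →ₗ[ℝ] E).IsSymmetric)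
    (h : ‖v‖ ^ 2 * (pTrace p v B + 2 * ⟪A v, v⟫ * LinearMap.trace ℝ E A
      + 2 * (p - 2) * ‖A v‖ ^ 2) = m * ⟪A v, v⟫ * pTrace p v A) :
    ‖v‖ ^ 2 * LinearMap.trace ℝ E (A ∘L A) = pTrace p v (B + A ∘L A) + (p - 2) * ‖A v‖ ^ 2
      - (m - 2) * ⟪A v, v⟫ * LinearMap.trace ℝ E A
      - m * (p - 2) * (⟪A v, v⟫ ^ 2 / ‖v‖ ^ 2) := by
  have hv' : ‖v‖ ≠ 0 := norm_ne_zero_iff.2 hv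
  rw [pTrace_add, pTrace_comp_self hA]
  have : pTrace p v A = ‖v‖ ^ 2 * LinearMap.trace ℝ E A + (p - 2) * ⟪A v, v⟫ := rfl
  rw [this] at h
  field_simp
  linear_combination -h

variable [FiniteDimensional ℝ E] {κ k y : ℝ}

theorem trace_comp_self_le (hp : 1 ≤ p) (hm : 2 ≤ m) (hv : v ≠ 0)
    (hA : (A : E →ₗ[ℝ] E).IsSymmetric)
    (h : ‖v‖ ^ 2 * (pTrace p v B + 2 * ⟪A v, v⟫ * LinearMap.trace ℝ E A
      + 2 * (p - 2) * ‖A v‖ ^ 2) = m * ⟪A v, v⟫ * pTrace p v A)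
    (hAv : ‖A v‖ ≤ κ * ‖v‖ * y) (hH : ∀ e, ⟪(B + A ∘L A) e, e⟫ ≤ k * y ^ 2 * ‖e‖ ^ 2) :
    LinearMap.trace ℝ E (A ∘L A) ≤ (m - 2) * κ * |LinearMap.trace ℝ E A| * y
      + ((Module.finrank ℝ E + p - 2) * k + (m + 1) * |p - 2| * κ ^ 2) * y ^ 2 := by
  have hv2 : 0 < ‖v‖ ^ 2 := by positivity
  have hAv2 : ‖A v‖ ^ 2 ≤ ‖v‖ ^ 2 * (κ * y) ^ 2 :=
    (pow_le_pow_left₀ (norm_nonneg _) hAv 2).trans_eq (by ring)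
  have hα : |⟪A v, v⟫| ≤ ‖v‖ ^ 2 * (κ * y) :=
    calc |⟪A v, v⟫| ≤ ‖A v‖ * ‖v‖ := abs_real_inner_le_norm _ _
      _ ≤ κ * ‖v‖ * y * ‖v‖ := by gcongr
      _ = ‖v‖ ^ 2 * (κ * y) := by ring
  have hα2 : ⟪A v, v⟫ ^ 2 / ‖v‖ ^ 2 ≤ ‖v‖ ^ 2 * (κ * y) ^ 2 := by
    rw [div_le_iff₀ hv2, ← sq_abs]
    exact (pow_le_pow_left₀ (abs_nonneg _) hα 2).trans_eq (by ring)
  have hgrad : (p - 2) * ‖A v‖ ^ 2 ≤ |p - 2| * (‖v‖ ^ 2 * (κ * y) ^ 2) := by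
    gcongr
    exact le_abs_self _
  have hcross : -((m - 2) * ⟪A v, v⟫ * LinearMap.trace ℝ E A)
      ≤ (m - 2) * (‖v‖ ^ 2 * (κ * y) * |LinearMap.trace ℝ E A|) := by
    rw [mul_assoc, ← mul_neg]
    gcongr
    calc _ ≤ |⟪A v, v⟫ * LinearMap.trace ℝ E A| := neg_le_abs _
      _ = |⟪A v, v⟫| * |LinearMap.trace ℝ E A| := abs_mul _ _
      _ ≤ _ := by gcongr
  have hradial : -(m * (p - 2) * (⟪A v, v⟫ ^ 2 / ‖v‖ ^ 2))
      ≤ m * (|p - 2| * (‖v‖ ^ 2 * (κ * y) ^ 2)) := by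
    rw [mul_assoc, ← mul_neg, ← neg_mul]
    gcongr
    exact neg_le_abs _
  refine le_of_mul_le_mul_left ?_ hv2
  linear_combination norm_sq_mul_trace_comp_self_eq hv hA h + pTrace_le (v := v) hp hH + hgrad
    + hcross + hradial

/-- The constant in Bernstein's estimate: `n` is the dimension, and at a maximum point `κ` and `k`
bound the first and the second derivatives of `|∇u|²`. -/
noncomputable def bernsteinConst (n : ℕ) (p m κ k : ℝ) : ℝ :=
  1 + n * ((m - 2) * κ) + n * ((n + p - 2) * k + (m + 1) * |p - 2| * κ ^ 2) + |p - 2| * κ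

theorem pTrace_le_bernsteinConst (hp : 1 ≤ p) (hm : 2 ≤ m) (hκ : 0 ≤ κ) (hk : 0 ≤ k) (hy : 0 ≤ y)
    (hv : v ≠ 0) (hA : (A : E →ₗ[ℝ] E).IsSymmetric)
    (h : ‖v‖ ^ 2 * (pTrace p v B + 2 * ⟪A v, v⟫ * LinearMap.trace ℝ E A
      + 2 * (p - 2) * ‖A v‖ ^ 2) = m * ⟪A v, v⟫ * pTrace p v A)
    (hAv : ‖A v‖ ≤ κ * ‖v‖ * y) (hH : ∀ e, ⟪(B + A ∘L A) e, e⟫ ≤ k * y ^ 2 * ‖e‖ ^ 2) :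
    pTrace p v A ≤ bernsteinConst (Module.finrank ℝ E) p m κ k * ‖v‖ ^ 2 * y := by
  have : Nontrivial E := nontrivial_of_ne v 0 hv
  have hn : (1 : ℝ) ≤ Module.finrank ℝ E := by exact_mod_cast Module.finrank_pos (R := ℝ) (M := E)
  have hk' : 0 ≤ (Module.finrank ℝ E + p - 2) * k := mul_nonneg (by linarith) hk
  have hT : |LinearMap.trace ℝ E A| ≤ (1 + Module.finrank ℝ E * ((m - 2) * κ) + Module.finrank ℝ E *
      ((Module.finrank ℝ E + p - 2) * k + (m + 1) * |p - 2| * κ ^ 2)) * y := by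
    refine le_mul_of_sq_le (by positivity) (by positivity) hy ?_
    rw [sq_abs]
    refine (sq_trace_le_finrank_mul_trace_comp_self hA).trans ?_
    linear_combination (Module.finrank ℝ E : ℝ) * trace_comp_self_le hp hm hv hA h hAv hH
  have hradial : (p - 2) * ⟪A v, v⟫ ≤ |p - 2| * (κ * ‖v‖ * y * ‖v‖) :=
    calc (p - 2) * ⟪A v, v⟫ ≤ |p - 2| * |⟪A v, v⟫| := (le_abs_self _).trans_eq (abs_mul _ _)
      _ ≤ |p - 2| * (‖A v‖ * ‖v‖) := by
        gcongr
        exact abs_real_inner_le_norm _ _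
      _ ≤ _ := by gcongr
  rw [pTrace, bernsteinConst]
  linear_combination ‖v‖ ^ 2 * ((le_abs_self _).trans hT) + hradial

end Jet

section SecondOrder

theorem nonpos_of_isLocalMax_of_hasDerivAt {f f' : ℝ → ℝ} {a t₀ : ℝ}
    (hf : ∀ᶠ t in 𝓝 t₀, HasDerivAt f (f' t) t) (hf' : HasDerivAt f' a t₀)
    (hmax : IsLocalMax f t₀) : a ≤ 0 := by
  by_contra! ha
  have hderiv : deriv f =ᶠ[𝓝 t₀] f' := hf.mono fun t ht => ht.deriv
  have hderiv₂ : deriv (deriv f) t₀ = a := by rw [hderiv.deriv_eq, hf'.deriv]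
  have hmin : IsLocalMin f t₀ := isLocalMin_of_deriv_deriv_pos (by rwa [hderiv₂])
    hmax.deriv_eq_zero hf.self_of_nhds.continuousAt
  have hconst : f =ᶠ[𝓝 t₀] fun _ => f t₀ := by
    filter_upwards [hmax, hmin] with t h₁ h₂ using le_antisymm h₁ h₂
  have hderiv_zero : deriv f =ᶠ[𝓝 t₀] fun _ => 0 := by simpa using hconst.deriv
  rw [hderiv_zero.deriv_eq, deriv_const] at hderiv₂
  exact ha.ne hderiv₂

variable {E : Type*} [NormedAddCommGroup E] [InnerProductSpace ℝ E] [CompleteSpace E]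
  {f d : E → ℝ} {f' d' : E → E} {H D : E →L[ℝ] E} {x : E} {κ : ℝ}

theorem inner_map_self_nonpos_of_isLocalMax (hf : ∀ᶠ y in 𝓝 x, HasGradientAt f (f' y) y)
    (hf' : HasFDerivAt f' H x) (hmax : IsLocalMax f x) (e : E) : ⟪H e, e⟫ ≤ 0 := by
  have hline (t : ℝ) : HasDerivAt (fun t : ℝ => x + t • e) e t := by
    simpa using ((hasDerivAt_id t).smul_const e).const_add x
  have hx : x + (0 : ℝ) • e = x := by simp
  have hline₀ : Tendsto (fun t : ℝ => x + t • e) (𝓝 0) (𝓝 x) := by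
    simpa using (hline 0).continuousAt.tendsto
  refine nonpos_of_isLocalMax_of_hasDerivAt (f := fun t : ℝ => f (x + t • e))
    (f' := fun t => ⟪f' (x + t • e), e⟫) (t₀ := 0) ?_ ?_ ?_
  · filter_upwards [hline₀.eventually hf] with t ht
    simpa [Function.comp_def] using ht.hasFDerivAt.comp_hasDerivAt t (hline t)
  · rw [← hx] at hf'
    simpa using (hf'.comp_hasDerivAt (0 : ℝ) (hline 0)).inner ℝ (hasDerivAt_const _ e)
  · filter_upwards [hline₀.eventually hmax] with t ht
    simpa using ht

theorem hasGradientAt_log_comp {v : E} (hf : HasGradientAt f v x) (hfx : f x ≠ 0) :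
    HasGradientAt (fun y => Real.log (f y)) ((f x)⁻¹ • v) x := by
  simpa [hasGradientAt_iff_hasFDerivAt] using hf.hasFDerivAt.log hfx

theorem hasFDerivAt_inv_smul_gradient (hf : HasGradientAt f (f' x) x) (hf' : HasFDerivAt f' H x)
    (hfx : f x ≠ 0) :
    HasFDerivAt (fun y => (f y)⁻¹ • f' y)
      ((f x)⁻¹ • H - ((f x) ^ 2)⁻¹ • (innerSL ℝ (f' x)).smulRight (f' x)) x := by
  refine (((hasDerivAt_inv hfx).comp_hasFDerivAt x hf.hasFDerivAt).fun_smul hf').congr_fderiv ?_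
  ext e
  simp [sub_eq_add_neg, smul_smul]

theorem hasGradientAt_log_add_mul_log {v w : E} (hf : HasGradientAt f v x)
    (hd : HasGradientAt d w x) (hfx : f x ≠ 0) (hdx : d x ≠ 0) :
    HasGradientAt (fun y => Real.log (f y) + κ * Real.log (d y))
      ((f x)⁻¹ • v + κ • (d x)⁻¹ • w) x := by
  simpa [hasGradientAt_iff_hasFDerivAt] using (hasGradientAt_log_comp hf hfx).hasFDerivAt.fun_add
    ((hasGradientAt_log_comp hd hdx).hasFDerivAt.const_mul κ)

theorem gradient_eq_of_isLocalMax_log_add_mul_log {v w : E} (hf : HasGradientAt f v x)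
    (hd : HasGradientAt d w x) (hfx : f x ≠ 0) (hdx : d x ≠ 0)
    (hmax : IsLocalMax (fun y => Real.log (f y) + κ * Real.log (d y)) x) :
    v = -(κ * f x / d x) • w := by
  have hgrad : (f x)⁻¹ • v + κ • (d x)⁻¹ • w = 0 := (LinearIsometryEquiv.map_eq_zero_iff _).1
    (hmax.hasFDerivAt_eq_zero (hasGradientAt_log_add_mul_log hf hd hfx hdx).hasFDerivAt)
  calc v = f x • (f x)⁻¹ • v := (smul_inv_smul₀ hfx v).symm
    _ = f x • -(κ • (d x)⁻¹ • w) := by rw [eq_neg_of_add_eq_zero_left hgrad]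
    _ = -(κ * f x / d x) • w := by module

theorem hessian_le_of_isLocalMax_log_add_mul_log (hf : ∀ᶠ y in 𝓝 x, HasGradientAt f (f' y) y)
    (hd : ∀ᶠ y in 𝓝 x, HasGradientAt d (d' y) y) (hf' : HasFDerivAt f' H x)
    (hd' : HasFDerivAt d' D x) (hfx : 0 < f x) (hdx : 0 < d x)
    (hmax : IsLocalMax (fun y => Real.log (f y) + κ * Real.log (d y)) x) (e : E) :
    ⟪H e, e⟫ ≤ f x * (κ * (κ + 1) * (⟪d' x, e⟫ / d x) ^ 2 - κ * ⟪D e, e⟫ / d x) := by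
  have hfx₀ := hf.self_of_nhds
  have hdx₀ := hd.self_of_nhds
  have hgrad : ∀ᶠ y in 𝓝 x, HasGradientAt (fun y => Real.log (f y) + κ * Real.log (d y))
      ((f y)⁻¹ • f' y + κ • (d y)⁻¹ • d' y) y := by
    filter_upwards [hf, hd, hfx₀.continuousAt.eventually_ne hfx.ne',
      hdx₀.continuousAt.eventually_ne hdx.ne'] with y
    exact hasGradientAt_log_add_mul_log
  have hhess := inner_map_self_nonpos_of_isLocalMax hgrad
    ((hasFDerivAt_inv_smul_gradient hfx₀ hf' hfx.ne').add
      ((hasFDerivAt_inv_smul_gradient hdx₀ hd' hdx.ne').const_smul κ)) hmax e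
  rw [gradient_eq_of_isLocalMax_log_add_mul_log hfx₀ hdx₀ hfx.ne' hdx.ne' hmax] at hhess
  simp only [_root_.add_apply, _root_.sub_apply, _root_.smul_apply,
    ContinuousLinearMap.smulRight_apply, innerSL_apply_apply, inner_add_left, inner_sub_left,
    real_inner_smul_left] at hhess
  have h := mul_le_mul_of_nonneg_left hhess hfx.le
  field_simp at h ⊢
  linarith

theorem log_barrier_estimates {R : ℝ} {c : E} (hf : ∀ᶠ y in 𝓝 x, HasGradientAt f (f' y) y)
    (hf' : HasFDerivAt f' H x) (hfx : 0 < f x) (hκ : 0 ≤ κ) (hR : 0 ≤ R)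
    (hdx : 0 < R ^ 2 - ‖x - c‖ ^ 2)
    (hmax : IsLocalMax (fun y => Real.log (f y) + κ * Real.log (R ^ 2 - ‖y - c‖ ^ 2)) x) :
    ‖f' x‖ ≤ 2 * κ * f x * (R / (R ^ 2 - ‖x - c‖ ^ 2)) ∧
      ∀ e, ⟪H e, e⟫ ≤ 2 * κ * (2 * κ + 3) * f x * (R / (R ^ 2 - ‖x - c‖ ^ 2)) ^ 2 * ‖e‖ ^ 2 := by
  have hd (y : E) : HasGradientAt (fun y => R ^ 2 - ‖y - c‖ ^ 2) ((-2 : ℝ) • (y - c)) y := by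
    rw [hasGradientAt_iff_hasFDerivAt]
    refine (((hasFDerivAt_id y).sub_const c).norm_sq.const_sub (R ^ 2)).congr_fderiv ?_
    ext e
    simp
  have hd' : HasFDerivAt (fun y => (-2 : ℝ) • (y - c)) ((-2 : ℝ) • ContinuousLinearMap.id ℝ E) x :=
    ((hasFDerivAt_id x).sub_const c).const_smul _
  have hxR : ‖x - c‖ ≤ R := by nlinarith [norm_nonneg (x - c)]
  set δ := R ^ 2 - ‖x - c‖ ^ 2 with hδ
  refine ⟨?_, fun e => ?_⟩
  · rw [gradient_eq_of_isLocalMax_log_add_mul_log hf.self_of_nhds (hd x) hfx.ne' hdx.ne' hmax,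
      ← hδ, smul_smul, norm_smul, Real.norm_eq_abs,
      abs_of_nonneg (by rw [neg_mul_neg]; positivity)]
    calc -(κ * f x / δ) * -2 * ‖x - c‖ ≤ -(κ * f x / δ) * -2 * R := by
          gcongr
          rw [neg_mul_neg]; positivity
      _ = _ := by ring
  · have hhess := hessian_le_of_isLocalMax_log_add_mul_log hf (.of_forall hd) hf' hd' hfx hdx hmax e
    have hinner : ⟪x - c, e⟫ ^ 2 ≤ (R * ‖e‖) ^ 2 := by
      rw [← sq_abs]
      gcongr
      exact (abs_real_inner_le_norm _ _).trans (by gcongr)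
    have hδR : δ⁻¹ ≤ R ^ 2 * (δ⁻¹) ^ 2 := by
      rw [sq δ⁻¹, ← mul_assoc]
      refine le_mul_of_one_le_left (by positivity) ?_
      rw [le_mul_inv_iff₀ hdx]
      linarith [sq_nonneg ‖x - c‖]
    calc ⟪H e, e⟫ ≤ _ := hhess
      _ = f x * (4 * κ * (κ + 1) * (δ⁻¹ ^ 2 * ⟪x - c, e⟫ ^ 2) + 2 * κ * ‖e‖ ^ 2 * δ⁻¹) := by
        simp only [← hδ, _root_.smul_apply, ContinuousLinearMap.id_apply, real_inner_smul_left,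
          real_inner_self_eq_norm_sq]
        ring
      _ ≤ f x * (4 * κ * (κ + 1) * (δ⁻¹ ^ 2 * (R * ‖e‖) ^ 2)
          + 2 * κ * ‖e‖ ^ 2 * (R ^ 2 * δ⁻¹ ^ 2)) := by gcongr
      _ = _ := by ring

end SecondOrder

section VectorField

variable {E : Type*} [NormedAddCommGroup E] [InnerProductSpace ℝ E] {P : E → E} {x : E} {p : ℝ}

theorem hasFDerivAt_norm_rpow_of_ne_zero (hx : x ≠ 0) (r : ℝ) :
    HasFDerivAt (fun y => ‖y‖ ^ r) ((r * ‖x‖ ^ (r - 2)) • innerSL ℝ x) x := by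
  have hpow (t : ℝ) (y : E) : (‖y‖ ^ 2) ^ (t / 2) = ‖y‖ ^ t := by
    rw [← Real.rpow_natCast_mul (norm_nonneg y)]
    congr 1
    push_cast
    ring
  have h := (hasFDerivAt_id x).norm_sq.rpow_const (p := r / 2) (Or.inl (by simpa))
  simp only [id, hpow] at h
  refine h.congr_fderiv ?_
  rw [show r / 2 - 1 = (r - 2) / 2 by ring, hpow]
  ext e
  simp only [ContinuousLinearMap.comp_id, _root_.smul_apply, coe_innerSL_apply, nsmul_eq_mul,
    Nat.cast_ofNat, smul_eq_mul]
  ring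

theorem hasGradientAt_norm_sq [CompleteSpace E] {A : E →L[ℝ] E} (hP : HasFDerivAt P A x)
    (hA : (A : E →ₗ[ℝ] E).IsSymmetric) :
    HasGradientAt (fun y => ‖P y‖ ^ 2) ((2 : ℝ) • A (P x)) x := by
  rw [hasGradientAt_iff_hasFDerivAt]
  refine hP.norm_sq.congr_fderiv ?_
  ext e
  simpa using (hA (P x) e).symm

theorem hasFDerivAt_fderiv (hP : ContDiffAt ℝ 2 P x) :
    HasFDerivAt (fderiv ℝ P) (fderiv ℝ (fderiv ℝ P) x) x :=
  ((hP.fderiv_right (m := 1) (by norm_num)).differentiableAt (by simp)).hasFDerivAt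

theorem hasFDerivAt_fderiv_apply_self (hP : ContDiffAt ℝ 2 P x) :
    HasFDerivAt (fun y => fderiv ℝ P y (P y))
      (fderiv ℝ (fderiv ℝ P) x (P x) + fderiv ℝ P x ∘L fderiv ℝ P x) x := by
  refine ((hasFDerivAt_fderiv hP).clm_apply
    (hP.differentiableAt (by simp)).hasFDerivAt).congr_fderiv ?_
  ext e
  simp [add_comm, (hP.isSymmSndFDerivAt (by simp)).eq e (P x)]

variable [FiniteDimensional ℝ E]

theorem trace_fderiv_norm_rpow_smul (hP : DifferentiableAt ℝ P x) (hx : P x ≠ 0) :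
    LinearMap.trace ℝ E (fderiv ℝ (fun y => ‖P y‖ ^ (p - 2) • P y) x)
      = ‖P x‖ ^ (p - 4) * pTrace p (P x) (fderiv ℝ P x) := by
  have hpow : HasFDerivAt (fun y => ‖P y‖ ^ (p - 2)) _ x :=
    (hasFDerivAt_norm_rpow_of_ne_zero hx (p - 2)).comp x hP.hasFDerivAt
  have hsplit : ‖P x‖ ^ (p - 2) = ‖P x‖ ^ (p - 4) * ‖P x‖ ^ 2 := by
    rw [← Real.rpow_two, ← Real.rpow_add (norm_pos_iff.2 hx)]
    ring_nf
  rw [(hpow.fun_smul hP.hasFDerivAt).fderiv, pTrace]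
  simp only [ContinuousLinearMap.toLinearMap_add, ContinuousLinearMap.toLinearMap_smul,
    map_add, map_smul, ContinuousLinearMap.coe_smulRight, LinearMap.trace_smulRight]
  simp only [hsplit, smul_eq_mul, ContinuousLinearMap.toLinearMap_comp,
    ContinuousLinearMap.toLinearMap_smul, ContinuousLinearMap.smul_comp, LinearMap.smul_apply,
    LinearMap.comp_apply, ContinuousLinearMap.coe_coe, coe_innerSL_apply, real_inner_comm]
  ring_nf

theorem hasDerivAt_pTrace {V : ℝ → E} {V' : E} {A : ℝ → E →L[ℝ] E} {A' : E →L[ℝ] E} {t : ℝ}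
    (hV : HasDerivAt V V' t) (hA : HasDerivAt A A' t) :
    HasDerivAt (fun s => pTrace p (V s) (A s)) (pTrace p (V t) A'
      + 2 * ⟪V t, V'⟫ * LinearMap.trace ℝ E (A t)
      + (p - 2) * (⟪A t V', V t⟫ + ⟪A t (V t), V'⟫)) t := by
  have htrace : HasDerivAt (fun s => LinearMap.trace ℝ E (A s)) (LinearMap.trace ℝ E A') t :=
    (LinearMap.toContinuousLinearMap
      (LinearMap.trace ℝ E ∘ₗ ContinuousLinearMap.coeLM ℝ)).hasFDerivAt.comp_hasDerivAt t hA
  refine ((hV.norm_sq.mul htrace).add (((hA.clm_apply hV).inner ℝ hV).const_mul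
    (p - 2))).congr_deriv ?_
  simp only [pTrace, inner_add_left]
  ring

theorem norm_sq_mul_deriv_pTrace_eq {m : ℝ} (hP : ContDiffAt ℝ 2 P x) (hx : P x ≠ 0)
    (hsymm : (fderiv ℝ P x : E →ₗ[ℝ] E).IsSymmetric)
    (heq : ∀ᶠ y in 𝓝 x, pTrace p (P y) (fderiv ℝ P y) = ‖P y‖ ^ m) :
    ‖P x‖ ^ 2 * (pTrace p (P x) (fderiv ℝ (fderiv ℝ P) x (P x))
        + 2 * ⟪fderiv ℝ P x (P x), P x⟫ * LinearMap.trace ℝ E (fderiv ℝ P x)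
        + 2 * (p - 2) * ‖fderiv ℝ P x (P x)‖ ^ 2)
      = m * ⟪fderiv ℝ P x (P x), P x⟫ * pTrace p (P x) (fderiv ℝ P x) := by
  set v := P x with hv
  have hline : HasDerivAt (fun t : ℝ => x + t • v) v 0 := by
    simpa using ((hasDerivAt_id (0 : ℝ)).smul_const v).const_add x
  have hline₀ : x + (0 : ℝ) • v = x := by simp
  have hV : HasDerivAt (fun t : ℝ => P (x + t • v)) (fderiv ℝ P x v) 0 :=
    (hP.differentiableAt (by simp)).hasFDerivAt.comp_hasDerivAt_of_eq 0 hline hline₀.symm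
  have hA : HasDerivAt (fun t : ℝ => fderiv ℝ P (x + t • v)) (fderiv ℝ (fderiv ℝ P) x v) 0 :=
    (hasFDerivAt_fderiv hP).comp_hasDerivAt_of_eq 0 hline hline₀.symm
  have hpow : HasDerivAt (fun t : ℝ => ‖P (x + t • v)‖ ^ m)
      (m * ‖v‖ ^ (m - 2) * ⟪v, fderiv ℝ P x v⟫) 0 :=
    (hasFDerivAt_norm_rpow_of_ne_zero hx m).comp_hasDerivAt_of_eq 0 hV (by rw [hline₀])
  have heq_line : ∀ᶠ t in 𝓝 (0 : ℝ),
      pTrace p (P (x + t • v)) (fderiv ℝ P (x + t • v)) = ‖P (x + t • v)‖ ^ m :=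
    (show Tendsto (fun t : ℝ => x + t • v) (𝓝 0) (𝓝 x) by
      simpa using hline.continuousAt.tendsto).eventually heq
  have hderiv := (hasDerivAt_pTrace (p := p) hV hA).unique (hpow.congr_of_eventuallyEq heq_line)
  have hsplit : ‖v‖ ^ m = ‖v‖ ^ (m - 2) * ‖v‖ ^ 2 := by
    rw [← Real.rpow_two, ← Real.rpow_add (norm_pos_iff.2 hx)]
    ring_nf
  have hsymm_v : ⟪fderiv ℝ P x (fderiv ℝ P x v), v⟫ = ‖fderiv ℝ P x v‖ ^ 2 :=
    (hsymm _ _).trans (real_inner_self_eq_norm_sq _)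
  rw [heq.self_of_nhds, ← hv, hsplit]
  simp only [hline₀, ← hv, hsymm_v, real_inner_self_eq_norm_sq, real_inner_comm _ v] at hderiv
  linear_combination ‖v‖ ^ 2 * hderiv

/-- Here `P` plays the role of `∇u`. -/
theorem norm_rpow_le_of_isLocalMax_log {m κ R : ℝ} {c : E} (hp : 1 ≤ p) (hm : 2 ≤ m) (hκ : 0 ≤ κ)
    (hR : 0 ≤ R) (hP : ContDiffAt ℝ 2 P x) (hx : P x ≠ 0)
    (hsymm : ∀ᶠ y in 𝓝 x, (fderiv ℝ P y : E →ₗ[ℝ] E).IsSymmetric)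
    (heq : ∀ᶠ y in 𝓝 x, pTrace p (P y) (fderiv ℝ P y) = ‖P y‖ ^ m)
    (hδ : 0 < R ^ 2 - ‖x - c‖ ^ 2)
    (hmax : IsLocalMax (fun y => Real.log (‖P y‖ ^ 2) + κ * Real.log (R ^ 2 - ‖y - c‖ ^ 2)) x) :
    ‖P x‖ ^ m ≤ bernsteinConst (Module.finrank ℝ E) p m κ (κ * (2 * κ + 3)) * ‖P x‖ ^ 3
      * (R / (R ^ 2 - ‖x - c‖ ^ 2)) := by
  have hgrad : ∀ᶠ y in 𝓝 x,
      HasGradientAt (fun y => ‖P y‖ ^ 2) ((2 : ℝ) • fderiv ℝ P y (P y)) y := by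
    filter_upwards [hsymm, hP.eventually (by simp)] with y hsymm_y hPy
    exact hasGradientAt_norm_sq (hPy.differentiableAt (by simp)).hasFDerivAt hsymm_y
  obtain ⟨hfirst, hsecond⟩ := log_barrier_estimates hgrad
    ((hasFDerivAt_fderiv_apply_self hP).const_smul (2 : ℝ)) (by positivity) hκ hR hδ hmax
  set δ := R ^ 2 - ‖x - c‖ ^ 2
  set A := fderiv ℝ P x
  set B := fderiv ℝ (fderiv ℝ P) x (P x)
  have hAv : ‖A (P x)‖ ≤ κ * ‖P x‖ * (‖P x‖ * (R / δ)) := by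
    rw [norm_smul, Real.norm_ofNat] at hfirst
    linarith
  have hH (e : E) :
      ⟪(B + A ∘L A) e, e⟫ ≤ κ * (2 * κ + 3) * (‖P x‖ * (R / δ)) ^ 2 * ‖e‖ ^ 2 := by
    have h := hsecond e
    rw [_root_.smul_apply, real_inner_smul_left] at h
    linarith
  rw [← heq.self_of_nhds]
  refine (pTrace_le_bernsteinConst hp hm hκ (by positivity) (by positivity) hx
    hsymm.self_of_nhds (norm_sq_mul_deriv_pTrace_eq hP hx hsymm.self_of_nhds heq)
    hAv hH).trans_eq ?_
  ring

end VectorField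

section Barrier

theorem exists_isLocalMax_mul_sq_sub_norm_sq {E : Type*} [NormedAddCommGroup E] [ProperSpace E]
    {g : E → ℝ} {c : E} {R : ℝ} (hg : ContinuousOn g (closedBall c R)) (hgc : 0 < g c)
    (hR : 0 < R) :
    ∃ x ∈ ball c R, g c * R ^ 2 ≤ g x * (R ^ 2 - ‖x - c‖ ^ 2) ∧
      IsLocalMax (fun y => g y * (R ^ 2 - ‖y - c‖ ^ 2)) x := by
  obtain ⟨x, hx, hmax⟩ := (isCompact_closedBall c R).exists_isMaxOn ⟨c, mem_closedBall_self hR.le⟩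
    (f := fun y => g y * (R ^ 2 - ‖y - c‖ ^ 2)) (hg.mul (by fun_prop))
  have hcx : g c * R ^ 2 ≤ g x * (R ^ 2 - ‖x - c‖ ^ 2) := by
    simpa using hmax (mem_closedBall_self hR.le)
  have hx_lt : ‖x - c‖ < R := by
    refine (mem_closedBall_iff_norm.1 hx).lt_of_ne fun h => ?_
    rw [h, sub_self, mul_zero] at hcx
    exact absurd hcx (not_le.2 (by positivity))
  have hx_ball : x ∈ ball c R := mem_ball_iff_norm.2 hx_lt
  exact ⟨x, hx_ball, hcx, hmax.isLocalMax (closedBall_mem_nhds_of_mem hx_ball)⟩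

theorem isLocalMax_log_sq_add_mul_log {X : Type*} [TopologicalSpace X] {g d : X → ℝ} {x : X} {θ : ℝ}
    (hθ : 0 < θ) (hg : ContinuousAt g x) (hd : ContinuousAt d x) (hgx : 0 < g x) (hdx : 0 < d x)
    (hmax : IsLocalMax (fun y => g y ^ θ * d y) x) :
    IsLocalMax (fun y => Real.log (g y ^ 2) + 2 / θ * Real.log (d y)) x := by
  have hsplit {y : X} (hgy : 0 < g y) (hdy : 0 < d y) :
      Real.log (g y ^ 2) + 2 / θ * Real.log (d y) = 2 / θ * Real.log (g y ^ θ * d y) := by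
    rw [Real.log_mul (by positivity) hdy.ne', Real.log_rpow hgy, Real.log_pow]
    push_cast
    field_simp
  filter_upwards [hmax, hg.eventually (lt_mem_nhds hgx), hd.eventually (lt_mem_nhds hdx)]
    with y hy hgy hdy
  rw [hsplit hgy hdy, hsplit hgx hdx]
  gcongr

end Barrier

section Gradient

variable {E : Type*} [NormedAddCommGroup E] [InnerProductSpace ℝ E] [CompleteSpace E]
  {u : E → ℝ} {x : E}

theorem contDiffAt_gradient {m n : WithTop ℕ∞} (hu : ContDiffAt ℝ n u x) (hmn : m + 1 ≤ n) :
    ContDiffAt ℝ m (∇ u) x :=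
  (toDual ℝ E).symm.contDiff.contDiffAt.comp x (hu.fderiv_right hmn)

theorem isSymmetric_fderiv_gradient (hu : ContDiffAt ℝ 2 u x) :
    (fderiv ℝ (∇ u) x : E →ₗ[ℝ] E).IsSymmetric := fun e e' => by
  have hdiff : DifferentiableAt ℝ (fderiv ℝ u) x :=
    (hu.fderiv_right (m := 1) (by norm_num)).differentiableAt (by simp)
  have hhess (a b : E) : ⟪fderiv ℝ (∇ u) x a, b⟫ = fderiv ℝ (fderiv ℝ u) x a b := by
    have hgrad : HasFDerivAt (∇ u) _ x :=
      (toDual ℝ E).symm.toContinuousLinearEquiv.hasFDerivAt.comp x hdiff.hasFDerivAt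
    simp [hgrad.fderiv]
  simp only [ContinuousLinearMap.coe_coe]
  rw [hhess, real_inner_comm, hhess, (hu.isSymmSndFDerivAt (by simp)).eq]

end Gradient

section Solution

variable {E : Type*} [NormedAddCommGroup E] [InnerProductSpace ℝ E] [FiniteDimensional ℝ E]
  {p q R : ℝ} {G : Set E} {u : E → ℝ} {c x : E}

/-- A `C¹` function on `G` solving `(E)` classically off its critical set. Nothing is asked of the
vector field `|∇u|^{p-2} ∇u` at critical points. -/
structure IsNoncriticalSolution (p q : ℝ) (G : Set E) (u : E → ℝ) : Prop where
  contDiffOn : ContDiffOn ℝ 1 u G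
  contDiffOn_noncritical : ContDiffOn ℝ 3 u {x | x ∈ G ∧ ∇ u x ≠ 0}
  trace_fderiv : ∀ x ∈ G, ∇ u x ≠ 0 →
    LinearMap.trace ℝ E (fderiv ℝ (fun y => ‖∇ u y‖ ^ (p - 2) • ∇ u y) x) = ‖∇ u x‖ ^ q

theorem IsStrongSolution.isNoncriticalSolution {N : ℕ} {G : Set (EuclideanSpace ℝ (Fin N))}
    {u : EuclideanSpace ℝ (Fin N) → ℝ} (hu : IsStrongSolution p q G u) :
    IsNoncriticalSolution p q G u :=
  ⟨hu.1, hu.2.1, fun x hx _ => (hu.2.2 x hx).2⟩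

namespace IsNoncriticalSolution

theorem continuousOn_gradient (hu : IsNoncriticalSolution p q G u) (hG : IsOpen G) :
    ContinuousOn (∇ u) G :=
  (toDual ℝ E).symm.continuous.comp_continuousOn
    (hu.contDiffOn.continuousOn_fderiv_of_isOpen hG le_rfl)

theorem isOpen_noncritical (hu : IsNoncriticalSolution p q G u) (hG : IsOpen G) :
    IsOpen {x | x ∈ G ∧ ∇ u x ≠ 0} :=
  (hu.continuousOn_gradient hG).isOpen_inter_preimage hG isOpen_compl_singleton

theorem contDiffAt (hu : IsNoncriticalSolution p q G u) (hG : IsOpen G) (hx : x ∈ G)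
    (hux : ∇ u x ≠ 0) : ContDiffAt ℝ 3 u x :=
  hu.contDiffOn_noncritical.contDiffAt ((hu.isOpen_noncritical hG).mem_nhds ⟨hx, hux⟩)

theorem pTrace_fderiv_gradient (hu : IsNoncriticalSolution p q G u) (hG : IsOpen G) (hx : x ∈ G)
    (hux : ∇ u x ≠ 0) : pTrace p (∇ u x) (fderiv ℝ (∇ u) x) = ‖∇ u x‖ ^ (q - p + 4) := by
  have hP : ContDiffAt ℝ 1 (∇ u) x := contDiffAt_gradient (hu.contDiffAt hG hx hux) (by norm_num)
  have htrace := hu.trace_fderiv x hx hux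
  rw [trace_fderiv_norm_rpow_smul (hP.differentiableAt (by simp)) hux] at htrace
  have hpos : 0 < ‖∇ u x‖ := norm_pos_iff.2 hux
  refine mul_left_cancel₀ (Real.rpow_pos_of_pos hpos (p - 4)).ne' ?_
  rw [htrace, ← Real.rpow_add hpos]
  ring_nf

end IsNoncriticalSolution

/-- The constant `C` in the interior estimate `|∇u(c)|^{q-p+1} ≤ C / R` for solutions of `(E)` on a
ball of radius `R` in dimension `n`. -/
noncomputable def gradientEstimateConst (n : ℕ) (p q : ℝ) : ℝ :=
  bernsteinConst n p (q - p + 4) (2 / (q - p + 1)) (2 / (q - p + 1) * (2 * (2 / (q - p + 1)) + 3))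

namespace IsNoncriticalSolution

theorem norm_gradient_rpow_mul_le_of_isLocalMax (hp : 1 ≤ p) (hq : p - 1 < q)
    (hu : IsNoncriticalSolution p q G u) (hG : IsOpen G) (hx : x ∈ G) (hux : ∇ u x ≠ 0)
    (hR : 0 ≤ R) (hδ : 0 < R ^ 2 - ‖x - c‖ ^ 2)
    (hmax : IsLocalMax (fun y => ‖∇ u y‖ ^ (q - p + 1) * (R ^ 2 - ‖y - c‖ ^ 2)) x) :
    ‖∇ u x‖ ^ (q - p + 1) * (R ^ 2 - ‖x - c‖ ^ 2)
      ≤ gradientEstimateConst (Module.finrank ℝ E) p q * R := by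
  have hθ : 0 < q - p + 1 := by linarith
  have hv : 0 < ‖∇ u x‖ := norm_pos_iff.2 hux
  have hnhds := (hu.isOpen_noncritical hG).mem_nhds ⟨hx, hux⟩
  have hP : ContDiffAt ℝ 2 (∇ u) x := contDiffAt_gradient (hu.contDiffAt hG hx hux) (by norm_num)
  have hlog := isLocalMax_log_sq_add_mul_log hθ hP.continuousAt.norm (by fun_prop) hv hδ hmax
  have hsymm : ∀ᶠ y in 𝓝 x, (fderiv ℝ (∇ u) y : E →ₗ[ℝ] E).IsSymmetric := by
    filter_upwards [hnhds] with y ⟨hy, huy⟩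
    exact isSymmetric_fderiv_gradient ((hu.contDiffAt hG hy huy).of_le (by norm_num))
  have heq : ∀ᶠ y in 𝓝 x, pTrace p (∇ u y) (fderiv ℝ (∇ u) y) = ‖∇ u y‖ ^ (q - p + 4) := by
    filter_upwards [hnhds] with y ⟨hy, huy⟩ using hu.pTrace_fderiv_gradient hG hy huy
  have hsplit : ‖∇ u x‖ ^ (q - p + 4) = ‖∇ u x‖ ^ (q - p + 1) * ‖∇ u x‖ ^ 3 := by
    rw [← Real.rpow_add_natCast hv.ne']
    ring_nf
  have h := norm_rpow_le_of_isLocalMax_log hp (by linarith) (by positivity) hR hP hux hsymm heq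
    hδ hlog
  rw [hsplit, mul_right_comm] at h
  rw [← le_div_iff₀ hδ, mul_div_assoc]
  exact le_of_mul_le_mul_right h (by positivity)

theorem norm_gradient_rpow_mul_le (hp : 1 ≤ p) (hq : p - 1 < q)
    (hu : IsNoncriticalSolution p q G u) (hG : IsOpen G) (hcG : closedBall c R ⊆ G) (hR : 0 < R)
    (huc : ∇ u c ≠ 0) :
    ‖∇ u c‖ ^ (q - p + 1) * R ≤ gradientEstimateConst (Module.finrank ℝ E) p q := by
  have hθ : 0 < q - p + 1 := by linarith
  have hpos : 0 < ‖∇ u c‖ ^ (q - p + 1) := Real.rpow_pos_of_pos (norm_pos_iff.2 huc) _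
  have hcont : ContinuousOn (fun y => ‖∇ u y‖ ^ (q - p + 1)) (closedBall c R) :=
    ((hu.continuousOn_gradient hG).mono hcG).norm.rpow_const fun _ _ => Or.inr hθ.le
  obtain ⟨x, hx, hcx, hmax⟩ := exists_isLocalMax_mul_sq_sub_norm_sq hcont hpos hR
  have hux : ∇ u x ≠ 0 := fun h => by
    rw [h, norm_zero, Real.zero_rpow hθ.ne', zero_mul] at hcx
    exact absurd hcx (not_le.2 (by positivity))
  have hδ : 0 < R ^ 2 - ‖x - c‖ ^ 2 :=
    sub_pos.2 (by gcongr; exact mem_ball_iff_norm.1 hx)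
  have h := hcx.trans (hu.norm_gradient_rpow_mul_le_of_isLocalMax hp hq hG
    (hcG (ball_subset_closedBall hx)) hux hR.le hδ hmax)
  rw [sq, ← mul_assoc] at h
  exact le_of_mul_le_mul_right h hR

end IsNoncriticalSolution

theorem liouville_general (hp : 1 ≤ p) (hq : p - 1 < q) (hu : IsNoncriticalSolution p q univ u) :
    ∀ x y : E, u x = u y := by
  have hgrad (x : E) : ∇ u x = 0 := by
    by_contra hux
    have hpos : 0 < ‖∇ u x‖ ^ (q - p + 1) := Real.rpow_pos_of_pos (norm_pos_iff.2 hux) _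
    have hlim : Tendsto (fun R => ‖∇ u x‖ ^ (q - p + 1) * R) atTop atTop :=
      tendsto_id.const_mul_atTop hpos
    obtain ⟨R, hRlarge, hR⟩ := ((hlim.eventually_gt_atTop
      (gradientEstimateConst (Module.finrank ℝ E) p q)).and (eventually_gt_atTop 0)).exists
    exact hRlarge.not_ge
      (hu.norm_gradient_rpow_mul_le hp hq isOpen_univ (subset_univ _) hR hux)
  refine is_const_of_fderiv_eq_zero ((contDiffOn_univ.1 hu.contDiffOn).differentiable (by simp))
    fun x => ?_
  simpa [gradient] using hgrad x

end Solution

/-- Liouville: any strong solution of (E) on all of `ℝ^N` is constant. -/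
theorem liouville (N : ℕ) (hN : 2 ≤ N) (p q : ℝ) (hp : 1 < p) (hq : p - 1 < q)
    (u : EuclideanSpace ℝ (Fin N) → ℝ) (hu : IsStrongSolution p q Set.univ u) :
    ∀ x y : EuclideanSpace ℝ (Fin N), u x = u y :=
  liouville_general hp.le hq hu.isNoncriticalSolution
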